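/- For every ε > 0 there exists C > 0 such that the following holds. Let u : ℝ³ → ℂ be differentiable with u, ∇u ∈ L²(ℝ³), and let α : ℝ³ → ℂ be measurable with ∫_{ℝ³} ω(k)|α(k)|² dk < ∞ and ∫_{ℝ³} ω(k)^{−1/2}|α(k)| dk < ∞. Then the function x ↦ (∫_{ℝ³} ω(k)^{−1/2} e^{ik·x} α(k) dk)·u(x) is in L²(ℝ³) with ‖(x ↦ (∫_{ℝ³} ω(k)^{−1/2} e^{ik·x} α(k) dk) u(x))‖_{L²} ≤ ε(‖u‖_{H¹}² + ∫_{ℝ³} ω(k)|α(k)|² dk) + C ‖u‖_{L²}². -/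

import Mathlib

open MeasureTheory
open scoped ENNReal
noncomputable section
/-- The dispersion relation `ω(k) = √(1+|k|²)` of the massive scalar field. -/
def ω (k : EuclideanSpace ℝ (Fin 3)) : ℝ := Real.sqrt (1 + ‖k‖ ^ 2)

/-- The square of the `H¹`-norm, `‖u‖_{H¹}² = ‖u‖_{L²}² + ‖∇u‖_{L²}²`. -/
def H1sq (u : EuclideanSpace ℝ (Fin 3) → ℂ) : ℝ :=
  (∫ x, ‖u x‖ ^ 2) + ∫ x, ‖fderiv ℝ u x‖ ^ 2

namespace NB
open scoped FourierTransform SchwartzMap LineDeriv Convolution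
open FourierTransform

abbrev E := EuclideanSpace ℝ (Fin 3)

lemma ae_eq_of_schwartz {f g : E → ℂ} (hf : LocallyIntegrable f volume)
    (hg : LocallyIntegrable g volume)
    (h : ∀ ψ : 𝓢(E, ℂ), ∫ x, ψ x * f x = ∫ x, ψ x * g x) : f =ᵐ[volume] g := by
  apply ae_eq_of_integral_contDiff_smul_eq hf hg
  intro ψ hs hc
  have hg₁ : HasCompactSupport (Complex.ofRealCLM ∘ ψ) := hc.comp_left rfl
  have hg₂ : ContDiff ℝ ((⊤ : ℕ∞) : WithTop ℕ∞) (Complex.ofRealCLM ∘ ψ) := by fun_prop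
  simpa using h (hg₁.toSchwartzMap hg₂)

lemma fourier_cont {f : E → ℂ} (h1 : Integrable f volume) : Continuous (𝓕 f) :=
  VectorFourier.fourierIntegral_continuous Real.continuous_fourierChar
    (L := innerₗ E) continuous_inner h1

lemma fourier_bound (f : E → ℂ) (x : E) : ‖𝓕 f x‖ ≤ ∫ y, ‖f y‖ :=
  VectorFourier.norm_fourierIntegral_le_integral_norm _ _ _ _ _

lemma fourier_toLp {f : E → ℂ} (h1 : Integrable f volume) (h2 : MemLp f 2 volume) :
    (𝓕 (h2.toLp f) : Lp ℂ 2 (volume : Measure E)) =ᵐ[volume] 𝓕 f := by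
  apply ae_eq_of_schwartz
  · exact (Lp.memLp _).locallyIntegrable (by norm_num)
  · exact (fourier_cont h1).locallyIntegrable
  intro ψ
  have e1 := congrArg (fun T : 𝓢'(E, ℂ) => T ψ) (Lp.fourier_toTemperedDistribution_eq (h2.toLp f))
  simp only [TemperedDistribution.fourier_apply, Lp.toTemperedDistribution_apply, smul_eq_mul] at e1
  rw [← e1]
  have e2 : ∫ x, (𝓕 ψ) x * (h2.toLp f) x = ∫ x, (𝓕 ψ) x * f x := by
    apply integral_congr_ae
    filter_upwards [h2.coeFn_toLp] with x hx
    rw [hx]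
  rw [e2]
  have := VectorFourier.integral_fourierIntegral_smul_eq_flip (𝕜 := ℝ) (L := innerₗ E)
    (μ := (volume : Measure E)) (ν := (volume : Measure E)) (f := (ψ : E → ℂ)) (g := f)
    Real.continuous_fourierChar continuous_inner ψ.integrable h1
  rw [flip_innerₗ] at this
  simp only [smul_eq_mul] at this
  rw [SchwartzMap.fourier_coe]
  exact this

lemma deriv_side {u : E → ℂ} (hd : Differentiable ℝ u) (hu : MemLp u 2 volume) (m : E)
    (hm : MemLp (fun x => fderiv ℝ u x m) 2 volume) :
    ∂_{m} ((hu.toLp u : Lp ℂ 2 (volume : Measure E)) : 𝓢'(E, ℂ)) =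
      ((hm.toLp _ : Lp ℂ 2 (volume : Measure E)) : 𝓢'(E, ℂ)) := by
  ext ψ
  simp only [TemperedDistribution.lineDerivOp_apply_apply, Lp.toTemperedDistribution_apply,
    smul_eq_mul]
  have e1 : ∫ x, (-∂_{m} ψ) x * (hu.toLp u) x = - ∫ x, fderiv ℝ ψ x m * u x := by
    rw [← integral_neg]
    apply integral_congr_ae
    filter_upwards [hu.coeFn_toLp] with x hx
    rw [hx]
    simp [SchwartzMap.lineDerivOp_apply_eq_fderiv]
  have e2 : ∫ x, ψ x * (hm.toLp _) x = ∫ x, ψ x * fderiv ℝ u x m := by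
    apply integral_congr_ae
    filter_upwards [hm.coeFn_toLp] with x hx
    rw [hx]
  rw [e1, e2]
  have hψ : MemLp ψ 2 (volume : Measure E) := ψ.memLp 2
  have hψ' : MemLp (fun x => fderiv ℝ ψ x m) 2 (volume : Measure E) := by
    have := (∂_{m} ψ).memLp 2 (volume : Measure E)
    refine (memLp_congr_ae (Filter.Eventually.of_forall fun x => ?_)).1 this
    simp [SchwartzMap.lineDerivOp_apply_eq_fderiv]
  rw [← integral_mul_fderiv_eq_neg_fderiv_mul_of_integrable]
  · exact hψ'.integrable_mul hu
  · exact hψ.integrable_mul hm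
  · exact hψ.integrable_mul hu
  · intro x _; exact ψ.differentiable x
  · intro x _; exact hd x

lemma fourierInv_deriv {u : E → ℂ} (hd : Differentiable ℝ u) (hu : MemLp u 2 volume) (m : E)
    (hm : MemLp (fun x => fderiv ℝ u x m) 2 volume) :
    (𝓕⁻ (hm.toLp _) : Lp ℂ 2 (volume : Measure E)) =ᵐ[volume]
      fun x => (-(2 * Real.pi * Complex.I) * (inner ℝ x m : ℝ)) *
        (𝓕⁻ (hu.toLp u) : Lp ℂ 2 (volume : Measure E)) x := by
  have hli : LocallyIntegrable
      (𝓕⁻ (hu.toLp u) : Lp ℂ 2 (volume : Measure E)) volume :=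
    (Lp.memLp _).locallyIntegrable (by norm_num)
  apply ae_eq_of_schwartz
  · exact (Lp.memLp _).locallyIntegrable (by norm_num)
  · have := hli.continuous_smul (g := fun x : E => (-(2 * Real.pi * Complex.I) * (inner ℝ x m : ℝ)))
      (by fun_prop)
    exact this
  intro ψ
  have e1 := congrArg (fun T : 𝓢'(E, ℂ) => (𝓕⁻ T) ψ) (deriv_side hd hu m hm)
  simp only [TemperedDistribution.fourierInv_lineDerivOp_eq,
    Lp.fourierInv_toTemperedDistribution_eq] at e1
  have ht : (fun x : E => ((inner ℝ x m : ℝ) : ℂ)).HasTemperateGrowth := by fun_prop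
  have e3 : ∫ x, ((SchwartzMap.smulLeftCLM ℂ (fun x : E => ((inner ℝ x m : ℝ) : ℂ))) ψ) x *
      (𝓕⁻ (hu.toLp u) : Lp ℂ 2 (volume : Measure E)) x =
      ∫ x, (((inner ℝ x m : ℝ) : ℂ) * ψ x) *
      (𝓕⁻ (hu.toLp u) : Lp ℂ 2 (volume : Measure E)) x := by
    simp only [SchwartzMap.smulLeftCLM_apply_apply ht, smul_eq_mul]
  have e4 : -(2 * Real.pi * Complex.I) *
     ∫ x, ((SchwartzMap.smulLeftCLM ℂ (fun x : E => ((inner ℝ x m : ℝ) : ℂ))) ψ) x *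
      (𝓕⁻ (hu.toLp u) : Lp ℂ 2 (volume : Measure E)) x = ∫ x, ψ x *
      (𝓕⁻ (hm.toLp _) : Lp ℂ 2 (volume : Measure E)) x := by
    simpa using e1
  rw [← e4, e3, ← integral_const_mul]
  congr 1
  ext x
  ring
/-- the constant `∫ (1+|x|²)^{-7/4}` -/
def A : ℝ≥0∞ := ∫⁻ x : E, ENNReal.ofReal ((1 + ‖x‖ ^ 2) ^ (-(7 / 2 : ℝ) / 2))

lemma A_lt_top : A < ⊤ := by
  have := integrable_rpow_neg_one_add_norm_sq (E := E) (μ := volume) (r := 7 / 2)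
    (by simp; norm_num)
  exact this.lintegral_lt_top

lemma cs_lintegral (f g : E → ℝ≥0∞) (hf : AEMeasurable f volume) (hg : AEMeasurable g volume) :
    (∫⁻ a, f a * g a) ^ 2 ≤ (∫⁻ a, f a ^ 2) * (∫⁻ a, g a ^ 2) := by
  have h := ENNReal.lintegral_mul_le_Lp_mul_Lq volume Real.HolderConjugate.two_two hf hg
  have h2 := pow_le_pow_left' h 2
  rw [mul_pow] at h2
  have key : ∀ X : ℝ≥0∞, (X ^ ((1 : ℝ) / 2)) ^ 2 = X := by
    intro X
    rw [← ENNReal.rpow_natCast, ← ENNReal.rpow_mul]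
    norm_num
  rw [key, key] at h2
  simpa using h2

lemma weight_le (a c : ℝ) (ha : 1 ≤ a) (hc : 1 ≤ c) :
    ((a ^ (1 / 2 : ℝ) * c ^ (3 / 8 : ℝ))⁻¹) ^ 2 ≤
      a ^ (-(7 / 2 : ℝ) / 2) + c ^ (-(7 / 2 : ℝ) / 2) := by
  have ha0 : 0 < a := by linarith
  have hc0 : 0 < c := by linarith
  have e : ((a ^ (1 / 2 : ℝ) * c ^ (3 / 8 : ℝ))⁻¹) ^ 2 = a ^ (-1 : ℝ) * c ^ (-(3 / 4) : ℝ) := by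
    rw [mul_inv, mul_pow, ← Real.rpow_neg ha0.le, ← Real.rpow_neg hc0.le, ← Real.rpow_natCast,
      ← Real.rpow_natCast, ← Real.rpow_mul ha0.le, ← Real.rpow_mul hc0.le]
    norm_num
  rw [e]
  have pa := Real.rpow_nonneg ha0.le (-(7 / 2 : ℝ) / 2)
  have pc := Real.rpow_nonneg hc0.le (-(7 / 2 : ℝ) / 2)
  rcases le_total a c with h | h
  · have : c ^ (-(3 / 4) : ℝ) ≤ a ^ (-(3 / 4) : ℝ) :=
      Real.rpow_le_rpow_of_nonpos ha0 h (by norm_num)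
    calc a ^ (-1 : ℝ) * c ^ (-(3 / 4) : ℝ) ≤ a ^ (-1 : ℝ) * a ^ (-(3 / 4) : ℝ) := by gcongr
      _ = a ^ (-(7 / 2 : ℝ) / 2) := by rw [← Real.rpow_add ha0]; norm_num
      _ ≤ _ := by linarith
  · have : a ^ (-1 : ℝ) ≤ c ^ (-1 : ℝ) :=
      Real.rpow_le_rpow_of_nonpos hc0 h (by norm_num)
    calc a ^ (-1 : ℝ) * c ^ (-(3 / 4) : ℝ) ≤ c ^ (-1 : ℝ) * c ^ (-(3 / 4) : ℝ) := by gcongr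
      _ = c ^ (-(7 / 2 : ℝ) / 2) := by rw [← Real.rpow_add hc0]; norm_num
      _ ≤ _ := by linarith

/-- the first weight -/
def P (b : E → ℂ) (x : E) : ℝ≥0∞ := ENNReal.ofReal (1 + ‖x‖ ^ 2) * ‖b x‖ₑ ^ 2

/-- the second weight -/
def Q (v : E → ℂ) (x : E) : ℝ≥0∞ := ENNReal.ofReal ((1 + ‖x‖ ^ 2) ^ (3 / 4 : ℝ)) * ‖v x‖ₑ ^ 2

lemma conv_bound {b v : E → ℂ} (hb : Measurable b) (hv : Measurable v) :
    ∫⁻ x, ‖(b ⋆[ContinuousLinearMap.mul ℂ ℂ, volume] v) x‖ₑ ^ 2 ≤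
      2 * A * ((∫⁻ x, P b x) * ∫⁻ x, Q v x) := by
  have hP : Measurable (P b) := by unfold P; fun_prop
  have hQ : Measurable (Q v) := by unfold Q; fun_prop
  have step : ∀ x, ‖(b ⋆[ContinuousLinearMap.mul ℂ ℂ, volume] v) x‖ₑ ^ 2 ≤
      2 * A * ∫⁻ t, P b t * Q v (x - t) := by
    intro x
    set w : E → ℝ := fun t => (1 + ‖t‖ ^ 2) ^ (1 / 2 : ℝ) * (1 + ‖x - t‖ ^ 2) ^ (3 / 8 : ℝ) with hw
    have hwm : Measurable w := by fun_prop
    have hw0 : ∀ t, 0 < w t := fun t => by positivity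
    have h1 : ‖(b ⋆[ContinuousLinearMap.mul ℂ ℂ, volume] v) x‖ₑ ≤
        ∫⁻ t, (ENNReal.ofReal ((w t)⁻¹)) * (ENNReal.ofReal (w t) * (‖b t‖ₑ * ‖v (x - t)‖ₑ)) := by
      refine (enorm_integral_le_lintegral_enorm _).trans (lintegral_mono fun t => ?_)
      rw [← mul_assoc, ← ENNReal.ofReal_mul (by have := hw0 t; positivity),
        inv_mul_cancel₀ (hw0 t).ne']
      simp
    refine (pow_le_pow_left' h1 2).trans ((cs_lintegral _ _ ?_ ?_).trans ?_)
    · fun_prop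
    · fun_prop
    refine mul_le_mul' ?_ (lintegral_mono fun t => ?_)
    · calc ∫⁻ t, ENNReal.ofReal ((w t)⁻¹) ^ 2
          ≤ ∫⁻ t, (ENNReal.ofReal ((1 + ‖t‖ ^ 2) ^ (-(7 / 2 : ℝ) / 2)) +
            ENNReal.ofReal ((1 + ‖x - t‖ ^ 2) ^ (-(7 / 2 : ℝ) / 2))) := by
            refine lintegral_mono fun t => ?_
            rw [← ENNReal.ofReal_pow (by have := hw0 t; positivity),
              ← ENNReal.ofReal_add (by positivity) (by positivity)]
            apply ENNReal.ofReal_le_ofReal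
            apply weight_le
            · nlinarith [sq_nonneg ‖t‖]
            · nlinarith [sq_nonneg ‖x - t‖]
        _ = A + A := by
            rw [lintegral_add_left (by fun_prop)]
            congr 1
            exact lintegral_sub_left_eq_self
              (fun t : E => ENNReal.ofReal ((1 + ‖t‖ ^ 2) ^ (-(7 / 2 : ℝ) / 2))) x
        _ = 2 * A := (two_mul _).symm
    · apply le_of_eq
      have e1 : ENNReal.ofReal (w t) ^ 2 =
          ENNReal.ofReal (1 + ‖t‖ ^ 2) * ENNReal.ofReal ((1 + ‖x - t‖ ^ 2) ^ (3 / 4 : ℝ)) := by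
        rw [← ENNReal.ofReal_pow (hw0 t).le, ← ENNReal.ofReal_mul (by positivity), hw]
        congr 1
        simp only
        rw [mul_pow, ← Real.rpow_mul_natCast (by positivity),
          ← Real.rpow_mul_natCast (by positivity)]
        norm_num
      simp only [P, Q, mul_pow, e1]
      ring
  calc _ ≤ ∫⁻ x, 2 * A * ∫⁻ t, P b t * Q v (x - t) := lintegral_mono step
    _ = 2 * A * ∫⁻ x, ∫⁻ t, P b t * Q v (x - t) := by
        rw [lintegral_const_mul]
        apply Measurable.lintegral_prod_right'
          (f := fun p : E × E => P b p.2 * Q v (p.1 - p.2))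
        fun_prop
    _ = 2 * A * ∫⁻ t, ∫⁻ x, P b t * Q v (x - t) := by
        rw [lintegral_lintegral_swap]
        apply Measurable.aemeasurable
        simp only [Function.uncurry_def]
        fun_prop
    _ = 2 * A * ∫⁻ t, P b t * ∫⁻ x, Q v x := by
        congr 1
        apply lintegral_congr
        intro t
        rw [lintegral_const_mul _ (by fun_prop), lintegral_sub_right_eq_self (Q v) t]
    _ = _ := by rw [lintegral_mul_const _ hP]

lemma sq_eLpNorm {F : Type*} [NormedAddCommGroup F] (f : E → F) :
    eLpNorm f 2 volume ^ 2 = ∫⁻ x, ‖f x‖ₑ ^ 2 := by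
  have := eLpNorm_nnreal_pow_eq_lintegral (μ := (volume : Measure E)) (f := f) (p := 2) (by norm_num)
  have h2 : ((2 : NNReal) : ℝ) = ((2 : ℕ) : ℝ) := by norm_num
  simp only [h2, ENNReal.rpow_natCast] at this
  exact_mod_cast this

lemma eLpNorm_fourierInv {f : E → ℂ} (h : MemLp f 2 volume) :
    eLpNorm (𝓕⁻ (h.toLp f) : Lp ℂ 2 (volume : Measure E)) 2 volume = eLpNorm f 2 volume := by
  have h1 : ‖(𝓕⁻ (h.toLp f) : Lp ℂ 2 (volume : Measure E))‖ = ‖h.toLp f‖ :=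
    (Lp.fourierTransformₗᵢ E ℂ).symm.norm_map _
  rw [Lp.norm_def, Lp.norm_def, ENNReal.toReal_eq_toReal_iff' (Lp.eLpNorm_ne_top _)
    (Lp.eLpNorm_ne_top _)] at h1
  rw [h1]
  exact eLpNorm_congr_ae h.coeFn_toLp

lemma eLpNorm_fourier {f : E → ℂ} (h : MemLp f 2 volume) :
    eLpNorm (𝓕 (h.toLp f) : Lp ℂ 2 (volume : Measure E)) 2 volume = eLpNorm f 2 volume := by
  have h1 : ‖(𝓕 (h.toLp f) : Lp ℂ 2 (volume : Measure E))‖ = ‖h.toLp f‖ :=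
    (Lp.fourierTransformₗᵢ E ℂ).norm_map _
  rw [Lp.norm_def, Lp.norm_def, ENNReal.toReal_eq_toReal_iff' (Lp.eLpNorm_ne_top _)
    (Lp.eLpNorm_ne_top _)] at h1
  rw [h1]
  exact eLpNorm_congr_ae h.coeFn_toLp

lemma lintegral_sq_eq {F : Type*} [NormedAddCommGroup F] {f : E → F} (h : MemLp f 2 volume) :
    ∫⁻ x, ‖f x‖ₑ ^ 2 = ENNReal.ofReal (∫ x, ‖f x‖ ^ 2) := by
  have hi : Integrable (fun x => ‖f x‖ ^ 2) (volume : Measure E) := by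
    have := h.integrable_norm_pow (by norm_num)
    simpa using this
  rw [ofReal_integral_eq_lintegral_ofReal hi (Filter.Eventually.of_forall fun x => by positivity)]
  apply lintegral_congr
  intro x
  rw [ENNReal.ofReal_pow (norm_nonneg _), ofReal_norm]
lemma Q_mono {v w : E → ℂ} (h : ∀ x, ‖w x‖ₑ ≤ ‖v x‖ₑ) : ∫⁻ x, Q w x ≤ ∫⁻ x, Q v x := by
  refine lintegral_mono fun x => ?_
  unfold Q
  gcongr
  exact h x

lemma le_sqrt_of_sq {X Y : ℝ≥0∞} (h : X ^ 2 ≤ Y) : X ≤ Y ^ (1 / 2 : ℝ) := by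
  have := ENNReal.rpow_le_rpow h (z := 1 / 2) (by norm_num)
  rw [← ENNReal.rpow_natCast, ← ENNReal.rpow_mul] at this
  simpa using this

lemma sqrt_sq (Y : ℝ≥0∞) : (Y ^ (1 / 2 : ℝ)) ^ 2 = Y := by
  rw [← ENNReal.rpow_natCast, ← ENNReal.rpow_mul]
  norm_num

lemma tail_tendsto {v : E → ℂ} (hv : Measurable v) (h2 : MemLp v 2 volume) :
    Filter.Tendsto (fun n : ℕ => eLpNorm ((Metric.ball (0 : E) n)ᶜ.indicator v) 2 volume)
      Filter.atTop (nhds 0) := by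
  have h0 : Filter.Tendsto
      (fun n : ℕ => ∫⁻ x, ‖(Metric.ball (0 : E) n)ᶜ.indicator v x‖ₑ ^ 2)
      Filter.atTop (nhds (∫⁻ _ : E, 0)) := by
    apply tendsto_lintegral_of_dominated_convergence (fun x => ‖v x‖ₑ ^ 2)
    · intro n
      have := hv.indicator (Metric.isOpen_ball (x := (0 : E)) (ε := n)).measurableSet.compl
      fun_prop
    · intro n
      refine Filter.Eventually.of_forall fun x => ?_
      simp only
      gcongr
      exact enorm_indicator_le_enorm_self _ _
    · rw [← sq_eLpNorm]
      exact (ENNReal.pow_lt_top h2.2).ne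
    · refine Filter.Eventually.of_forall fun x => ?_
      apply tendsto_const_nhds.congr'
      obtain ⟨N, hN⟩ := exists_nat_gt ‖x‖
      filter_upwards [Filter.eventually_ge_atTop N] with n hn
      have : x ∉ (Metric.ball (0 : E) n)ᶜ := by
        simp only [Set.mem_compl_iff, Metric.mem_ball, dist_zero_right, not_not]
        exact hN.trans_le (by exact_mod_cast hn)
      simp [Set.indicator_of_notMem this]
  have h1 := (ENNReal.continuous_rpow_const (y := (1 / 2 : ℝ))).tendsto _ |>.comp h0
  simp only [lintegral_zero] at h1
  rw [ENNReal.zero_rpow_of_pos (by norm_num)] at h1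
  refine h1.congr fun n => ?_
  simp only [Function.comp_apply]
  rw [← sq_eLpNorm, ← ENNReal.rpow_natCast, ← ENNReal.rpow_mul]
  simp

lemma trunc_bound {b v : E → ℂ} (hb : Measurable b) (hbi : Integrable b volume)
    (hv : Measurable v) (hvi : Integrable v volume) (h : 2 * A * ((∫⁻ x, P b x) * ∫⁻ x, Q v x) < ⊤) :
    eLpNorm (fun x => 𝓕 b x * 𝓕 v x) 2 volume ^ 2 ≤ 2 * A * ((∫⁻ x, P b x) * ∫⁻ x, Q v x) := by
  have hc : Integrable (b ⋆[ContinuousLinearMap.mul ℂ ℂ, volume] v) volume :=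
    hbi.integrable_convolution _ hvi
  have hle := conv_bound hb hv
  rw [← sq_eLpNorm] at hle
  have hc2 : MemLp (b ⋆[ContinuousLinearMap.mul ℂ ℂ, volume] v) 2 volume := by
    refine ⟨hc.aestronglyMeasurable, ?_⟩
    have := hle.trans_lt h
    by_contra hcon
    rw [not_lt, top_le_iff] at hcon
    rw [hcon] at this
    simp at this
  have e : (fun x => 𝓕 b x * 𝓕 v x) = 𝓕 (b ⋆[ContinuousLinearMap.mul ℂ ℂ, volume] v) := by
    ext x
    rw [Real.fourier_mul_convolution_eq hbi hvi]
  rw [e, ← eLpNorm_congr_ae (fourier_toLp hc hc2), eLpNorm_fourier]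
  exact hle

lemma main_bound {b u : E → ℂ} (hb : Measurable b) (hbi : Integrable b volume)
    (hu : MemLp u 2 volume) :
    MemLp (fun x => 𝓕 b x * u x) 2 volume ∧
    eLpNorm (fun x => 𝓕 b x * u x) 2 volume ^ 2 ≤ 2 * A * ((∫⁻ x, P b x) *
      ∫⁻ x, Q (𝓕⁻ (hu.toLp u) : Lp ℂ 2 (volume : Measure E)) x) := by
  have hcont := fourier_cont hbi
  refine ⟨hu.of_le_mul (c := ∫ y, ‖b y‖) (hcont.aestronglyMeasurable.mul hu.1)
    (Filter.Eventually.of_forall fun x => ?_), ?_⟩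
  · rw [norm_mul]
    gcongr
    exact fourier_bound b x
  set V : Lp ℂ 2 (volume : Measure E) := 𝓕⁻ (hu.toLp u) with hV
  set v : E → ℂ := ⇑V with hvdef
  have hvm : Measurable v := (Lp.stronglyMeasurable V).measurable
  have hv2 : MemLp v 2 volume := Lp.memLp V
  set R := 2 * A * ((∫⁻ x, P b x) * ∫⁻ x, Q v x) with hR
  rcases eq_or_ne R ⊤ with hT | hT
  · rw [hT]; exact le_top
  have hmain : ∀ n : ℕ, eLpNorm (fun x => 𝓕 b x * u x) 2 volume ≤ R ^ (1 / 2 : ℝ) +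
      ENNReal.ofReal (∫ y, ‖b y‖) *
        eLpNorm ((Metric.ball (0 : E) n)ᶜ.indicator v) 2 volume := by
    intro n
    have hms : MeasurableSet (Metric.ball (0 : E) n) := Metric.isOpen_ball.measurableSet
    set vn := (Metric.ball (0 : E) n).indicator v with hvn
    have hvnm : Measurable vn := hvm.indicator hms
    have hvn2 : MemLp vn 2 volume := hv2.indicator hms
    have hvni : Integrable vn volume := by
      rw [hvn, integrable_indicator_iff hms]
      exact (hv2.locallyIntegrable (by norm_num)).integrableOn_isCompact
        (isCompact_closedBall (0 : E) n) |>.mono_set Metric.ball_subset_closedBall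
    have hRn : 2 * A * ((∫⁻ x, P b x) * ∫⁻ x, Q vn x) ≤ R := by
      rw [hR]
      gcongr 2 * A * (_ * ?_)
      exact Q_mono fun x => enorm_indicator_le_enorm_self _ _
    have h1 := le_sqrt_of_sq ((trunc_bound hb hbi hvnm hvni (hRn.trans_lt hT.lt_top)).trans hRn)
    have hsplit : (fun x => 𝓕 b x * u x) =
        (fun x => 𝓕 b x * 𝓕 vn x) + (fun x => 𝓕 b x * (u x - 𝓕 vn x)) := by
      ext x; simp only [Pi.add_apply]; ring
    have hvc := (fourier_cont hvni).aestronglyMeasurable (μ := (volume : Measure E))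
    have hbc := hcont.aestronglyMeasurable (μ := (volume : Measure E))
    rw [hsplit]
    refine (eLpNorm_add_le (hbc.mul hvc) (hbc.mul (hu.1.sub hvc)) (by norm_num)).trans ?_
    refine add_le_add h1 ?_
    have h2 : eLpNorm (fun x => 𝓕 b x * (u x - 𝓕 vn x)) 2 volume ≤
        ENNReal.ofReal (∫ y, ‖b y‖) * eLpNorm (fun x => u x - 𝓕 vn x) 2 volume := by
      refine eLpNorm_le_mul_eLpNorm_of_ae_le_mul (Filter.Eventually.of_forall fun x => ?_) 2
      rw [norm_mul]
      gcongr
      exact fourier_bound b x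
    refine h2.trans (le_of_eq ?_)
    congr 1
    have hc2 : MemLp ((Metric.ball (0 : E) n)ᶜ.indicator v) 2 volume := hv2.indicator hms.compl
    rw [← eLpNorm_fourier hc2]
    have hd : hc2.toLp _ = V - hvn2.toLp _ := by
      have : V = hv2.toLp v := (Lp.toLp_coeFn V hv2).symm
      rw [this, ← MemLp.toLp_sub]
      congr 1
      ext x
      simp only [Pi.sub_apply, hvn]
      have := congrFun (Set.indicator_compl_add_self (Metric.ball (0 : E) n) v) x
      simp only [Pi.add_apply] at this
      linear_combination this
    have hFV : 𝓕 V = hu.toLp u := by rw [hV, fourier_fourierInv_eq]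
    have hFd : 𝓕 (hc2.toLp _) = hu.toLp u - 𝓕 (hvn2.toLp _) := by
      rw [hd, ← hFV]
      exact (Lp.fourierTransformₗᵢ E ℂ).map_sub _ _
    rw [hFd]
    apply eLpNorm_congr_ae
    filter_upwards [Lp.coeFn_sub (hu.toLp u) (𝓕 (hvn2.toLp _)), hu.coeFn_toLp,
      fourier_toLp hvni hvn2] with x h1 h2 h3
    rw [h1, Pi.sub_apply, h2, h3]
  have hlim : Filter.Tendsto (fun n : ℕ => R ^ (1 / 2 : ℝ) +
      ENNReal.ofReal (∫ y, ‖b y‖) *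
        eLpNorm ((Metric.ball (0 : E) n)ᶜ.indicator v) 2 volume) Filter.atTop
      (nhds (R ^ (1 / 2 : ℝ) + ENNReal.ofReal (∫ y, ‖b y‖) * 0)) :=
    tendsto_const_nhds.add
      (ENNReal.Tendsto.const_mul (tail_tendsto hvm hv2) (Or.inr ENNReal.ofReal_ne_top))
  have hfin := ge_of_tendsto' hlim hmain
  rw [mul_zero, add_zero] at hfin
  have := pow_le_pow_left' hfin 2
  rwa [sqrt_sq] at this

lemma weight_bound {u : E → ℂ} (hd : Differentiable ℝ u) (hu : MemLp u 2 volume)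
    (hg : MemLp (fun x => fderiv ℝ u x) 2 volume) :
    ∫⁻ x, P (𝓕⁻ (hu.toLp u) : Lp ℂ 2 (volume : Measure E)) x ≤
      ENNReal.ofReal ((∫ x, ‖u x‖ ^ 2) + ∫ x, ‖fderiv ℝ u x‖ ^ 2) := by
  set v : E → ℂ := ⇑(𝓕⁻ (hu.toLp u) : Lp ℂ 2 (volume : Measure E)) with hv
  have hvm : Measurable v := (Lp.stronglyMeasurable _).measurable
  have h0 : ∫⁻ x, ‖v x‖ₑ ^ 2 = ENNReal.ofReal (∫ x, ‖u x‖ ^ 2) := by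
    rw [← sq_eLpNorm, hv, eLpNorm_fourierInv, sq_eLpNorm, lintegral_sq_eq hu]
  have hm : ∀ j : Fin 3, MemLp (fun x => fderiv ℝ u x (EuclideanSpace.single j 1)) 2 volume := by
    intro j
    refine hg.of_le_mul (c := 1) ?_ (Filter.Eventually.of_forall fun x => ?_)
    · exact (ContinuousLinearMap.apply ℝ ℂ
        (EuclideanSpace.single j (1 : ℝ))).continuous.comp_aestronglyMeasurable hg.1
    · have := (fderiv ℝ u x).le_opNorm (EuclideanSpace.single j 1)
      simpa using this
  have hj : ∀ j : Fin 3, ∫⁻ x : E, ENNReal.ofReal ((2 * Real.pi * x j) ^ 2) * ‖v x‖ₑ ^ 2 ≤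
      ENNReal.ofReal (∫ x, ‖fderiv ℝ u x‖ ^ 2) := by
    intro j
    have e := fourierInv_deriv hd hu _ (hm j)
    calc ∫⁻ x : E, ENNReal.ofReal ((2 * Real.pi * x j) ^ 2) * ‖v x‖ₑ ^ 2
        = ∫⁻ x, ‖(𝓕⁻ ((hm j).toLp _) : Lp ℂ 2 (volume : Measure E)) x‖ₑ ^ 2 := by
          apply lintegral_congr_ae
          filter_upwards [e] with x hx
          have hn : ‖-(2 * Real.pi * Complex.I) *
              ((inner ℝ x (EuclideanSpace.single j (1 : ℝ)) : ℝ) : ℂ)‖ₑ ^ 2 =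
              ENNReal.ofReal ((2 * Real.pi * x j) ^ 2) := by
            rw [← ofReal_norm, ← ENNReal.ofReal_pow (norm_nonneg _)]
            congr 1
            simp [mul_pow, EuclideanSpace.inner_single_right]
          rw [hx, enorm_mul, ← hn]
          exact (mul_pow _ _ 2).symm
      _ = ∫⁻ x, ‖fderiv ℝ u x (EuclideanSpace.single j 1)‖ₑ ^ 2 := by
          rw [← sq_eLpNorm, eLpNorm_fourierInv, sq_eLpNorm]
      _ ≤ ∫⁻ x, ‖fderiv ℝ u x‖ₑ ^ 2 := by
          refine lintegral_mono fun x => ?_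
          simp only
          gcongr
          rw [enorm_le_iff_norm_le]
          have := (fderiv ℝ u x).le_opNorm (EuclideanSpace.single j 1)
          simpa using this
      _ = _ := lintegral_sq_eq hg
  rw [ENNReal.ofReal_add (integral_nonneg fun x => by positivity)
    (integral_nonneg fun x => by positivity), ← h0]
  have hsum : ∫⁻ x : E, ENNReal.ofReal (‖x‖ ^ 2) * ‖v x‖ₑ ^ 2 ≤
      ENNReal.ofReal (∫ x, ‖fderiv ℝ u x‖ ^ 2) := by
    have hs : ∑ j : Fin 3, ∫⁻ x : E, ENNReal.ofReal ((2 * Real.pi * x j) ^ 2) * ‖v x‖ₑ ^ 2 ≤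
        3 * ENNReal.ofReal (∫ x, ‖fderiv ℝ u x‖ ^ 2) := by
      refine (Finset.sum_le_sum fun j _ => hj j).trans (le_of_eq ?_)
      simp
    rw [← lintegral_finsetSum _ (fun j _ => by fun_prop)] at hs
    have h3 : 3 * ∫⁻ x : E, ENNReal.ofReal (‖x‖ ^ 2) * ‖v x‖ₑ ^ 2 ≤
        3 * ENNReal.ofReal (∫ x, ‖fderiv ℝ u x‖ ^ 2) := by
      refine le_trans ?_ hs
      rw [← lintegral_const_mul _ (by fun_prop)]
      refine lintegral_mono fun x => ?_
      simp only
      rw [← Finset.sum_mul, ← mul_assoc]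
      gcongr
      rw [← ENNReal.ofReal_sum_of_nonneg (fun j _ => sq_nonneg _)]
      have h33 : (3 : ℝ≥0∞) = ENNReal.ofReal 3 := by simp
      rw [h33, ← ENNReal.ofReal_mul (by norm_num)]
      apply ENNReal.ofReal_le_ofReal
      rw [EuclideanSpace.norm_sq_eq]
      simp only [mul_pow, ← Finset.mul_sum, Real.norm_eq_abs, sq_abs]
      gcongr
      nlinarith [Real.pi_gt_three]
    exact (ENNReal.mul_le_mul_iff_right (by norm_num) (by norm_num)).1 h3
  calc ∫⁻ x, P v x = ∫⁻ x, (‖v x‖ₑ ^ 2 + ENNReal.ofReal (‖x‖ ^ 2) * ‖v x‖ₑ ^ 2) := by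
        apply lintegral_congr
        intro x
        rw [P, ENNReal.ofReal_add (by norm_num) (by positivity), add_mul]
        simp
    _ = (∫⁻ x, ‖v x‖ₑ ^ 2) + ∫⁻ x, ENNReal.ofReal (‖x‖ ^ 2) * ‖v x‖ₑ ^ 2 := by
        rw [lintegral_add_left (by fun_prop)]
    _ ≤ _ := by gcongr

lemma omega_pos (k : E) : 0 < ω k := Real.sqrt_pos.2 (by positivity)

lemma omega_sq (k : E) : ω k ^ 2 = 1 + ‖k‖ ^ 2 := Real.sq_sqrt (by positivity)

lemma omega_meas : Measurable ω := by unfold ω; fun_prop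

/-- the function `ω^{-1/2} α` -/
def β (α : E → ℂ) (k : E) : ℂ := ((ω k ^ (-(1 : ℝ) / 2) : ℝ) : ℂ) * α k

lemma beta_meas {α : E → ℂ} (hα : Measurable α) : Measurable (β α) := by
  have := omega_meas
  unfold β
  fun_prop

lemma beta_norm (α : E → ℂ) (k : E) : ‖β α k‖ = ω k ^ (-(1 : ℝ) / 2) * ‖α k‖ := by
  rw [β, norm_mul, Complex.norm_real, Real.norm_of_nonneg (Real.rpow_nonneg (omega_pos k).le _)]

lemma beta_int {α : E → ℂ} (hα : Measurable α)
    (h : ∫⁻ k, ENNReal.ofReal (ω k ^ (-(1 : ℝ) / 2) * ‖α k‖) < ⊤) :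
    Integrable (β α) volume := by
  refine ⟨(beta_meas hα).aestronglyMeasurable, ?_⟩
  rw [hasFiniteIntegral_iff_norm]
  simpa only [beta_norm] using h

/-- rescaled version of `β` -/
def bb (α : E → ℂ) (x : E) : ℂ := (((2 * Real.pi) ^ 3 : ℝ) : ℂ) * β α ((-(2 * Real.pi)) • x)

lemma bb_meas {α : E → ℂ} (hα : Measurable α) : Measurable (bb α) := by
  have := beta_meas hα
  unfold bb
  fun_prop

lemma bb_int {α : E → ℂ} (hα : Measurable α)
    (h : ∫⁻ k, ENNReal.ofReal (ω k ^ (-(1 : ℝ) / 2) * ‖α k‖) < ⊤) :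
    Integrable (bb α) volume :=
  ((beta_int hα h).comp_smul (by have := Real.pi_pos; simp [this.ne'])).const_mul _

lemma abs_scale : |((-(2 * Real.pi)) ^ Module.finrank ℝ E)⁻¹| = ((2 * Real.pi) ^ 3)⁻¹ := by
  rw [finrank_euclideanSpace_fin, abs_inv, abs_pow, abs_neg, abs_of_pos (by positivity)]

lemma bb_fourier (α : E → ℂ) (x : E) :
    ∫ k, ((ω k ^ (-(1 : ℝ) / 2) : ℝ) : ℂ) *
            Complex.exp (Complex.I * ((inner ℝ k x : ℝ) : ℂ)) * α k = 𝓕 (bb α) x := by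
  rw [Real.fourier_eq']
  have h := Measure.integral_comp_smul (volume : Measure E)
    (fun k : E => ((ω k ^ (-(1 : ℝ) / 2) : ℝ) : ℂ) *
            Complex.exp (Complex.I * ((inner ℝ k x : ℝ) : ℂ)) * α k) (-(2 * Real.pi))
  rw [abs_scale] at h
  have hp : ((2 * Real.pi) ^ 3 : ℝ) ≠ 0 := by positivity
  calc _ = ((2 * Real.pi) ^ 3 : ℝ) • (((2 * Real.pi) ^ 3 : ℝ)⁻¹ • ∫ k, ((ω k ^ (-(1 : ℝ) / 2) : ℝ) : ℂ) *
            Complex.exp (Complex.I * ((inner ℝ k x : ℝ) : ℂ)) * α k) := by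
          rw [smul_smul, mul_inv_cancel₀ hp, one_smul]
    _ = _ := by
      rw [← h, ← integral_smul]
      congr 1
      ext y
      simp only [bb, β, inner_smul_left, Complex.real_smul, smul_eq_mul]
      have : Complex.I * (((starRingEnd ℝ) (-(2 * Real.pi)) * inner ℝ y x : ℝ) : ℂ) =
          ((-2 * Real.pi * inner ℝ y x : ℝ) : ℂ) * Complex.I := by
        simp
        ring
      rw [this]
      ring

lemma bb_P {α : E → ℂ} (hα : Measurable α)
    (h : ∫⁻ k, ENNReal.ofReal (ω k * ‖α k‖ ^ 2) < ⊤) :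
    ∫⁻ x, P (bb α) x ≤ ENNReal.ofReal ((2 * Real.pi) ^ 3 * ∫ k, ω k * ‖α k‖ ^ 2) := by
  have hInt : Integrable (fun k => ω k * ‖α k‖ ^ 2) volume := by
    refine ⟨(omega_meas.mul (hα.norm.pow_const 2)).aestronglyMeasurable, ?_⟩
    rw [hasFiniteIntegral_iff_ofReal (Filter.Eventually.of_forall fun k =>
      mul_nonneg (omega_pos k).le (sq_nonneg _))]
    exact h
  have hc : (-(2 * Real.pi)) ≠ 0 := by have := Real.pi_pos; simp [this.ne']
  have hInt2 := (hInt.comp_smul hc).const_mul ((2 * Real.pi) ^ 6)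
  have hval : ∫ x : E, (2 * Real.pi) ^ 6 * (ω ((-(2 * Real.pi)) • x) *
      ‖α ((-(2 * Real.pi)) • x)‖ ^ 2) = (2 * Real.pi) ^ 3 * ∫ k, ω k * ‖α k‖ ^ 2 := by
    rw [integral_const_mul, Measure.integral_comp_smul (volume : Measure E)
      (fun k => ω k * ‖α k‖ ^ 2), abs_scale, smul_eq_mul, ← mul_assoc]
    congr 1
    have : (2 * Real.pi) ^ 3 ≠ 0 := by positivity
    field_simp
  rw [← hval, ofReal_integral_eq_lintegral_ofReal hInt2]
  · refine lintegral_mono fun x => ?_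
    rw [P, ← ofReal_norm, ← ENNReal.ofReal_pow (norm_nonneg _),
      ← ENNReal.ofReal_mul (by positivity)]
    apply ENNReal.ofReal_le_ofReal
    set k := (-(2 * Real.pi)) • x with hk
    have hkn : ‖k‖ = 2 * Real.pi * ‖x‖ := by
      rw [hk, norm_smul, Real.norm_eq_abs, abs_neg, abs_of_pos (by positivity)]
    have hle : 1 + ‖x‖ ^ 2 ≤ ω k ^ 2 := by
      rw [omega_sq, hkn, mul_pow]
      have : (1 : ℝ) ≤ (2 * Real.pi) ^ 2 := by nlinarith [Real.pi_gt_three]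
      nlinarith [sq_nonneg ‖x‖]
    have hbn : ‖bb α x‖ = (2 * Real.pi) ^ 3 * (ω k ^ (-(1 : ℝ) / 2) * ‖α k‖) := by
      rw [bb, norm_mul, ← hk, beta_norm, Complex.norm_real, Real.norm_of_nonneg (by positivity)]
    have hw : (ω k ^ (-(1 : ℝ) / 2)) ^ 2 * ω k ^ 2 = ω k := by
      rw [← Real.rpow_mul_natCast (omega_pos k).le, ← Real.rpow_natCast,
        ← Real.rpow_add (omega_pos k)]
      norm_num
    rw [hbn]
    calc (1 + ‖x‖ ^ 2) * ((2 * Real.pi) ^ 3 * (ω k ^ (-(1 : ℝ) / 2) * ‖α k‖)) ^ 2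
        ≤ ω k ^ 2 * ((2 * Real.pi) ^ 3 * (ω k ^ (-(1 : ℝ) / 2) * ‖α k‖)) ^ 2 := by gcongr
      _ = (2 * Real.pi) ^ 6 * (((ω k ^ (-(1 : ℝ) / 2)) ^ 2 * ω k ^ 2) * ‖α k‖ ^ 2) := by ring
      _ = _ := by rw [hw]
  · exact Filter.Eventually.of_forall fun x =>
      mul_nonneg (by positivity) (mul_nonneg (omega_pos _).le (sq_nonneg _))

lemma interp (t δ : ℝ) (ht : 1 ≤ t) (hδ : 0 < δ) : t ^ (3 / 4 : ℝ) ≤ δ * t + (δ⁻¹) ^ 3 := by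
  have ht0 : 0 ≤ t := by linarith
  set s := t ^ (1 / 4 : ℝ) with hs
  have hs0 : 0 ≤ s := Real.rpow_nonneg ht0 _
  have e3 : t ^ (3 / 4 : ℝ) = s ^ 3 := by
    rw [hs, ← Real.rpow_mul_natCast ht0]; norm_num
  have e4 : t = s ^ 4 := by
    rw [hs, ← Real.rpow_mul_natCast ht0]; norm_num
  rw [e3]
  clear_value s
  rw [e4]
  have hd := inv_pos.2 hδ
  rcases le_total s δ⁻¹ with h | h
  · have : s ^ 3 ≤ δ⁻¹ ^ 3 := by gcongr
    nlinarith [mul_nonneg hδ.le (pow_nonneg hs0 4)]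
  · have h1 : 1 ≤ δ * s := by
      have := mul_le_mul_of_nonneg_left h hδ.le
      rwa [mul_inv_cancel₀ hδ.ne'] at this
    have : s ^ 3 ≤ δ * s ^ 4 := by nlinarith [pow_nonneg hs0 3]
    have := pow_pos hd 3
    linarith

lemma Q_bound {u : E → ℂ} (hd : Differentiable ℝ u) (hu : MemLp u 2 volume)
    (hg : MemLp (fun x => fderiv ℝ u x) 2 volume) (δ : ℝ) (hδ : 0 < δ) :
    ∫⁻ x, Q (𝓕⁻ (hu.toLp u) : Lp ℂ 2 (volume : Measure E)) x ≤
      ENNReal.ofReal (δ * H1sq u + (δ⁻¹) ^ 3 * ∫ x, ‖u x‖ ^ 2) := by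
  have hP := weight_bound hd hu hg
  set v : E → ℂ := ⇑(𝓕⁻ (hu.toLp u) : Lp ℂ 2 (volume : Measure E)) with hv
  have hvm : Measurable v := (Lp.stronglyMeasurable _).measurable
  have h0 : ∫⁻ x, ‖v x‖ₑ ^ 2 = ENNReal.ofReal (∫ x, ‖u x‖ ^ 2) := by
    rw [← sq_eLpNorm, hv, eLpNorm_fourierInv, sq_eLpNorm, lintegral_sq_eq hu]
  have hPm : Measurable (P v) := by unfold P; fun_prop
  have hU : 0 ≤ ∫ x, ‖u x‖ ^ 2 := integral_nonneg fun x => by positivity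
  have hG : 0 ≤ ∫ x, ‖fderiv ℝ u x‖ ^ 2 := integral_nonneg fun x => by positivity
  have hH : 0 ≤ H1sq u := add_nonneg hU hG
  calc ∫⁻ x, Q v x ≤ ∫⁻ x, (ENNReal.ofReal δ * P v x + ENNReal.ofReal ((δ⁻¹) ^ 3) * ‖v x‖ₑ ^ 2) := by
        refine lintegral_mono fun x => ?_
        simp only [P, Q]
        rw [← mul_assoc, ← add_mul, ← ENNReal.ofReal_mul hδ.le,
          ← ENNReal.ofReal_add (by positivity) (by positivity)]
        gcongr
        exact interp _ δ (by nlinarith [sq_nonneg ‖x‖]) hδ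
    _ = ENNReal.ofReal δ * (∫⁻ x, P v x) + ENNReal.ofReal ((δ⁻¹) ^ 3) * ∫⁻ x, ‖v x‖ₑ ^ 2 := by
        rw [lintegral_add_left (by fun_prop), lintegral_const_mul _ hPm,
          lintegral_const_mul _ (by fun_prop)]
    _ ≤ ENNReal.ofReal δ * ENNReal.ofReal (H1sq u) +
          ENNReal.ofReal ((δ⁻¹) ^ 3) * ENNReal.ofReal (∫ x, ‖u x‖ ^ 2) := by
        rw [h0]
        gcongr
        exact hP
    _ = _ := by
        rw [← ENNReal.ofReal_mul hδ.le, ← ENNReal.ofReal_mul (by positivity),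
          ← ENNReal.ofReal_add (by positivity) (by positivity)]

end NB

/-- For every `ε > 0` there is `C > 0` such that for differentiable `u` with `u, ∇u ∈ L²`
and `α` with `∫ ω|α|² < ∞`, `∫ ω^{-1/2}|α| < ∞`, the function
`x ↦ (∫ ω(k)^{−1/2} e^{ik·x} α(k) dk)·u(x)` is in `L²` with
`‖·‖_{L²} ≤ ε(‖u‖_{H¹}² + ∫ ω|α|²) + C‖u‖_{L²}²`. -/
theorem G_alpha_u_bound (ε : ℝ) (hε : 0 < ε) :
    ∃ C > 0, ∀ (u : EuclideanSpace ℝ (Fin 3) → ℂ)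
      (α : EuclideanSpace ℝ (Fin 3) → ℂ),
      Differentiable ℝ u → MemLp u 2 volume →
      MemLp (fun x => fderiv ℝ u x) 2 volume →
      Measurable α →
      (∫⁻ k, ENNReal.ofReal (ω k * ‖α k‖ ^ 2) < ⊤) →
      (∫⁻ k, ENNReal.ofReal (ω k ^ (-(1 : ℝ) / 2) * ‖α k‖) < ⊤) →
      MemLp (fun x =>
          (∫ k, ((ω k ^ (-(1 : ℝ) / 2) : ℝ) : ℂ) *
            Complex.exp (Complex.I * ((inner ℝ k x : ℝ) : ℂ)) * α k) * u x) 2 volume ∧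
      eLpNorm (fun x =>
          (∫ k, ((ω k ^ (-(1 : ℝ) / 2) : ℝ) : ℂ) *
            Complex.exp (Complex.I * ((inner ℝ k x : ℝ) : ℂ)) * α k) * u x) 2 volume ≤
        ENNReal.ofReal
          (ε * (H1sq u + ∫ k, ω k * ‖α k‖ ^ 2) +
            C * ∫ x, ‖u x‖ ^ 2) := by
  have hAt := NB.A_lt_top
  set K : ℝ := 2 * NB.A.toReal * (2 * Real.pi) ^ 3 + 1 with hK
  have hKpos : 0 < K := by positivity
  set δ : ℝ := 4 * ε ^ 2 / K with hδ
  have hδpos : 0 < δ := by positivity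
  refine ⟨K / (4 * ε) * (δ⁻¹) ^ 3, by positivity, ?_⟩
  intro u α hd hu hg hα h1 h2
  simp only [NB.bb_fourier]
  obtain ⟨hmem, hle⟩ := NB.main_bound (NB.bb_meas hα) (NB.bb_int hα h2) hu
  refine ⟨hmem, ?_⟩
  have hP := NB.bb_P hα h1
  have hQ := NB.Q_bound hd hu hg δ hδpos
  set B := ∫ k, ω k * ‖α k‖ ^ 2 with hB
  set U := ∫ x, ‖u x‖ ^ 2 with hU
  have hB0 : 0 ≤ B := integral_nonneg fun k => mul_nonneg (NB.omega_pos k).le (sq_nonneg _)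
  have hU0 : 0 ≤ U := integral_nonneg fun x => by positivity
  have hH0 : 0 ≤ H1sq u := add_nonneg hU0 (integral_nonneg fun x => by positivity)
  set Y := δ * H1sq u + (δ⁻¹) ^ 3 * U with hY
  have hY0 : 0 ≤ Y := by positivity
  have hA2 : (2 * NB.A : ℝ≥0∞) = ENNReal.ofReal (2 * NB.A.toReal) := by
    rw [ENNReal.ofReal_mul (by norm_num), ENNReal.ofReal_toReal hAt.ne]
    simp
  have hZ : ε * (H1sq u + B) + K / (4 * ε) * (δ⁻¹) ^ 3 * U = ε * B + K / (4 * ε) * Y := by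
    rw [hY, mul_add (K / (4 * ε))]
    have : K / (4 * ε) * (δ * H1sq u) = ε * H1sq u := by
      rw [hδ]; field_simp
    rw [this]
    ring
  rw [hZ]
  have hsq : eLpNorm (fun x => FourierTransform.fourier (NB.bb α) x * u x) 2 volume ^ 2 ≤
      ENNReal.ofReal (ε * B + K / (4 * ε) * Y) ^ 2 := by
    calc _ ≤ _ := hle
      _ ≤ ENNReal.ofReal (2 * NB.A.toReal) *
          (ENNReal.ofReal ((2 * Real.pi) ^ 3 * B) * ENNReal.ofReal Y) := by
          rw [hA2]
          gcongr
      _ = ENNReal.ofReal (2 * NB.A.toReal * ((2 * Real.pi) ^ 3 * B * Y)) := by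
          rw [← ENNReal.ofReal_mul (by positivity), ← ENNReal.ofReal_mul (by positivity)]
      _ ≤ ENNReal.ofReal ((ε * B + K / (4 * ε) * Y) ^ 2) := by
          apply ENNReal.ofReal_le_ofReal
          have hBY : 0 ≤ B * Y := by positivity
          have e1 : 2 * NB.A.toReal * ((2 * Real.pi) ^ 3 * B * Y) ≤ K * (B * Y) := by
            rw [hK]; nlinarith
          have e2 : K * (B * Y) = 4 * (ε * B) * (K / (4 * ε) * Y) := by
            field_simp
          nlinarith [sq_nonneg (ε * B - K / (4 * ε) * Y)]
      _ = _ := by rw [ENNReal.ofReal_pow (by positivity)]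
  have := NB.le_sqrt_of_sq hsq
  rw [← ENNReal.rpow_natCast, ← ENNReal.rpow_mul] at this
  simpa using this

end
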